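/- arXiv:2310.16019 — 2 statements merged into one kernel-verified Lean document; each statement's English description precedes it below -/
import Mathlib

section
/- For every x ∈ M = {(p, q) : ℚ × ℤ | 0 ≤ p ∧ (p = 0 → 0 ≤ q)} and every natural number n ≥ 1, there exist u ∈ M and a natural number r < n such that x = n • u + (0, r), where n • u is the n-fold sum of u and (0, r) ∈ M. (The structure M satisfies the Presburger divisibility axiom schema.) -/
/-- The set `M = {(p, q) : ℚ × ℤ | 0 ≤ p ∧ (p = 0 → 0 ≤ q)}`. -/
def M : Set (ℚ × ℤ) := {x | 0 ≤ x.1 ∧ (x.1 = 0 → 0 ≤ x.2)}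

/-!
`M` is the cone of nonnegative elements of `ℚ × ℤ` in the lexicographic order, whose least positive
element is `e = (0, 1)`. Division with remainder by `n` is possible in the whole group, since `ℚ` is
divisible. The quotient `u` of a nonnegative element is again nonnegative: otherwise `u ≤ -e`, so
`n • u + r • e ≤ (r - n) • e < 0`.
-/

theorem exists_eq_nsmul_add_nsmul_lt {A : Type*} [AddCommGroup A] (v e : A) (k : ℤ) {n : ℕ}
    (hn : n ≠ 0) : ∃ u : A, ∃ r < n, n • v + k • e = n • u + r • e := by
  have hnZ : (n : ℤ) ≠ 0 := mod_cast hn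
  obtain ⟨r, hr⟩ := Int.eq_ofNat_of_zero_le (Int.emod_nonneg k hnZ)
  have hrn : r < n := by
    have := Int.emod_lt_of_pos k (by lia : (0 : ℤ) < n)
    lia
  refine ⟨v + (k / n) • e, r, hrn, ?_⟩
  calc n • v + k • e = n • v + (n * (k / n) + r : ℤ) • e := by rw [← hr, Int.mul_ediv_add_emod]
    _ = n • (v + (k / n) • e) + r • e := by
      rw [add_smul, mul_smul, natCast_zsmul, natCast_zsmul, nsmul_add, add_assoc]

section LinearOrder

variable {A : Type*} [AddCommGroup A] [LinearOrder A] [IsOrderedAddMonoid A] {e : A}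

theorem nonneg_of_nsmul_add_nsmul_nonneg (he : 0 ⋖ e) {u : A} {n r : ℕ} (hrn : r < n)
    (h : 0 ≤ n • u + r • e) : 0 ≤ u := by
  by_contra! hu
  have hue : u ≤ -e := le_neg_of_le_neg (he.ge_of_gt (neg_pos.mpr hu))
  refine h.not_gt ?_
  calc n • u + r • e ≤ n • -e + r • e := by gcongr
    _ < n • -e + n • e := by gcongr; exact he.lt
    _ = 0 := by rw [← nsmul_add, neg_add_cancel, nsmul_zero]

theorem exists_nonneg_eq_nsmul_add_nsmul_lt (he : 0 ⋖ e) {v : A} {k : ℤ} {n : ℕ} (hn : n ≠ 0)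
    (h : 0 ≤ n • v + k • e) : ∃ u : A, 0 ≤ u ∧ ∃ r < n, n • v + k • e = n • u + r • e := by
  obtain ⟨u, r, hrn, hur⟩ := exists_eq_nsmul_add_nsmul_lt v e k hn
  exact ⟨u, nonneg_of_nsmul_add_nsmul_nonneg he hrn (hur ▸ h), r, hrn, hur⟩

end LinearOrder

theorem zero_covBy_toLex_zero_one {D : Type*} [Preorder D] [Zero D] :
    (0 : D ×ₗ ℤ) ⋖ toLex (0, 1) :=
  Prod.Lex.toLex_covBy_toLex_iff.mpr (.inl ⟨rfl, Order.covBy_add_one (0 : ℤ)⟩)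

theorem mem_M_iff_toLex_nonneg {x : ℚ × ℤ} : x ∈ M ↔ 0 ≤ toLex x := by
  rw [← toLex_zero, Prod.Lex.toLex_le_toLex', Prod.fst_zero, Prod.snd_zero, eq_comm]
  rfl

theorem M_division_general {D : Type*} [AddCommGroup D] [LinearOrder D] [IsOrderedAddMonoid D]
    [DivisibleBy D ℤ] {x : D × ℤ} (hx : 0 ≤ toLex x) {n : ℕ} (hn : n ≠ 0) :
    ∃ u : D × ℤ, 0 ≤ toLex u ∧ ∃ r < n, x = n • u + ((0 : D), (r : ℤ)) := by
  obtain ⟨p, q⟩ := x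
  have hdiv : n • DivisibleBy.div p (n : ℤ) = p := by
    rw [← natCast_zsmul, DivisibleBy.div_cancel p (mod_cast hn)]
  have hpq : (p, q) = n • (DivisibleBy.div p (n : ℤ), (0 : ℤ)) + q • ((0 : D), (1 : ℤ)) := by
    ext <;> simp [hdiv]
  rw [hpq, toLex_add, toLex_smul, toLex_smul] at hx
  obtain ⟨u, hu, r, hrn, hur⟩ := exists_nonneg_eq_nsmul_add_nsmul_lt zero_covBy_toLex_zero_one hn hx
  refine ⟨ofLex u, hu, r, hrn, ?_⟩
  calc (p, q) = n • ofLex u + r • ((0 : D), (1 : ℤ)) := hpq.trans (congrArg ofLex hur)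
    _ = n • ofLex u + (0, (r : ℤ)) := by simp

/-- `M` satisfies the Presburger divisibility axiom schema: every `x ∈ M` can be
written as `n • u + (0, r)` with `u ∈ M` and `r < n`, for every `n ≥ 1`. -/
theorem M_division (x : ℚ × ℤ) (hx : x ∈ M) (n : ℕ) (hn : 1 ≤ n) :
    ∃ u ∈ M, ∃ r : ℕ, r < n ∧ x = n • u + ((0 : ℚ), (r : ℤ)) := by
  simpa only [mem_M_iff_toLex_nonneg] using
    M_division_general (mem_M_iff_toLex_nonneg.mp hx) (Nat.one_le_iff_ne_zero.mp hn)
end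

section
/- The function V_M on M satisfies the inductive axioms for V₂: (i) V_M(x) = (0,0) if and only if x = (0,0); (ii) if there is no t ∈ M with t + t = x, then V_M(x) = (0,1); (iii) for all x, t ∈ M, if x = t + t and x ≠ (0,0), then V_M(x) = V_M(t) + V_M(t). -/
/-!
Since `V₂ 0 = 0` and `V₂` is `1` at odd numbers, the four cases defining `V_M` collapse to two:
`V_M (p, 0) = (p, 0)`, and `V_M (p, q) = (0, V₂ |q|)` for `q ≠ 0`. On both of them `V_M` commutes
with doubling, because `V₂` is multiplicative and `V₂ 2 = 2`. As `ℚ` is divisible, an element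
`(p, q)` of `M` that is not a double in `M` has `q` odd, and there `V₂ |q| = 1`.
-/

/-- `V₂ x` is the largest power of 2 dividing `x`, with `V₂ 0 = 0`. -/
def V2 (x : ℕ) : ℕ := if x = 0 then 0 else 2 ^ padicValNat 2 x

/-- The function `V_M` on (ambient) `ℚ × ℤ`, matching on `M` the definition:
`V_M (0, n) = (0, V₂ n)`; `V_M (p, q) = (0, 1)` if `p ≠ 0` and `q` odd;
`V_M (p, q) = (0, V₂ |q|)` if `p ≠ 0`, `q` even, `q ≠ 0`; `V_M (p, 0) = (p, 0)`
for `p ≠ 0`. -/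
noncomputable def VM (x : ℚ × ℤ) : ℚ × ℤ :=
  if x.1 = 0 then ((0 : ℚ), (V2 x.2.natAbs : ℤ))
  else if x.2 = 0 then (x.1, 0)
  else if Odd x.2 then ((0 : ℚ), (1 : ℤ))
  else ((0 : ℚ), (V2 x.2.natAbs : ℤ))

lemma V2_zero : V2 0 = 0 := if_pos rfl

lemma V2_of_ne_zero {n : ℕ} (hn : n ≠ 0) : V2 n = 2 ^ padicValNat 2 n := if_neg hn

lemma V2_eq_zero_iff {n : ℕ} : V2 n = 0 ↔ n = 0 := by
  refine ⟨fun h => ?_, fun h => h ▸ V2_zero⟩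
  by_contra hn
  exact pow_ne_zero _ two_ne_zero (V2_of_ne_zero hn ▸ h)

lemma V2_of_odd {n : ℕ} (hn : Odd n) : V2 n = 1 := by
  rw [V2_of_ne_zero hn.pos.ne', padicValNat.eq_zero_of_not_dvd hn.not_two_dvd_nat, pow_zero]

lemma V2_two : V2 2 = 2 := by
  rw [V2_of_ne_zero two_ne_zero, padicValNat_self, pow_one]

lemma V2_mul (m n : ℕ) : V2 (m * n) = V2 m * V2 n := by
  rcases eq_or_ne m 0 with rfl | hm
  · rw [zero_mul, V2_zero, zero_mul]
  rcases eq_or_ne n 0 with rfl | hn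
  · rw [mul_zero, V2_zero, mul_zero]
  rw [V2_of_ne_zero (mul_ne_zero hm hn), V2_of_ne_zero hm, V2_of_ne_zero hn,
    padicValNat.mul hm hn, pow_add]

lemma VM_mk_zero (p : ℚ) : VM (p, 0) = (p, 0) := by
  by_cases hp : p = 0 <;> simp [VM, hp, V2_zero]

lemma VM_mk_of_ne_zero (p : ℚ) {q : ℤ} (hq : q ≠ 0) : VM (p, q) = (0, (V2 q.natAbs : ℤ)) := by
  by_cases hodd : Odd q
  · simp [VM, hq, V2_of_odd hodd.natAbs]
  · simp [VM, hq, hodd]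

lemma VM_mk_of_odd (p : ℚ) {q : ℤ} (hq : Odd q) : VM (p, q) = (0, 1) := by
  have hq₀ : q ≠ 0 := by
    rintro rfl
    exact Int.not_odd_zero hq
  rw [VM_mk_of_ne_zero p hq₀, V2_of_odd hq.natAbs, Nat.cast_one]

lemma VM_eq_zero_iff {x : ℚ × ℤ} : VM x = 0 ↔ x = 0 := by
  obtain ⟨p, q⟩ := x
  rcases eq_or_ne q 0 with rfl | hq
  · rw [VM_mk_zero]
  · simp [VM_mk_of_ne_zero p hq, V2_eq_zero_iff, hq]

lemma VM_add_self (x : ℚ × ℤ) : VM (x + x) = VM x + VM x := by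
  obtain ⟨p, q⟩ := x
  rw [Prod.mk_add_mk]
  rcases eq_or_ne q 0 with rfl | hq
  · rw [add_zero, VM_mk_zero, VM_mk_zero, Prod.mk_add_mk, add_zero]
  · have hV2 : V2 (q + q).natAbs = V2 q.natAbs + V2 q.natAbs := by
      have habs : (q + q).natAbs = 2 * q.natAbs := by lia
      rw [habs, V2_mul, V2_two, two_mul]
    have hqq : q + q ≠ 0 := by lia
    rw [VM_mk_of_ne_zero _ hqq, VM_mk_of_ne_zero p hq, hV2, Prod.mk_add_mk, add_zero,
      Nat.cast_add]

lemma exists_mem_M_add_self_eq {x : ℚ × ℤ} (hx : x ∈ M) (heven : Even x.2) :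
    ∃ t ∈ M, t + t = x := by
  obtain ⟨p, q⟩ := x
  obtain ⟨r, rfl : q = r + r⟩ := heven
  obtain ⟨hp, hr⟩ : 0 ≤ p ∧ (p = 0 → 0 ≤ r + r) := hx
  have hhalf : p / 2 = 0 → 0 ≤ r := fun h => by
    have hp₀ : p = 0 := by linarith
    exact nonneg_add_self_iff.mp (hr hp₀)
  exact ⟨(p / 2, r), ⟨div_nonneg hp zero_le_two, hhalf⟩, by rw [Prod.mk_add_mk, add_halves]⟩

/-- `V_M` satisfies the inductive axioms for `V₂` on `M`:
(i) `V_M x = (0,0)` iff `x = (0,0)`;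
(ii) if no `t ∈ M` has `t + t = x`, then `V_M x = (0,1)`;
(iii) if `x = t + t` with `t ∈ M` and `x ≠ (0,0)`, then `V_M x = V_M t + V_M t`. -/
theorem VM_inductive_axioms :
    (∀ x ∈ M, (VM x = ((0 : ℚ), (0 : ℤ)) ↔ x = ((0 : ℚ), (0 : ℤ)))) ∧
    (∀ x ∈ M, (¬∃ t ∈ M, t + t = x) → VM x = ((0 : ℚ), (1 : ℤ))) ∧
    (∀ x ∈ M, ∀ t ∈ M, x = t + t → x ≠ ((0 : ℚ), (0 : ℤ)) →
      VM x = VM t + VM t) := by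
  refine ⟨fun x _ => VM_eq_zero_iff, fun x hx hdouble => ?_, ?_⟩
  · have hodd : Odd x.2 :=
      Int.not_even_iff_odd.mp fun heven => hdouble (exists_mem_M_add_self_eq hx heven)
    exact VM_mk_of_odd x.1 hodd
  · rintro _ - t - rfl -
    exact VM_add_self t
end
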